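/- Consider the simple random walk on the m-cycle with state space S = {0, …, m−1}, transition matrix P(x,y) = ( 1{y ≡ x+1 (mod m)} + 1{y ≡ x−1 (mod m)} ) / 2, initial distribution q, and f : S → [a,b]. Then for every t > 0, Pr_q( |Σ_{k=1}^n ( f(X_k) − E_q[f(X_k)] )| ≥ t ) ≤ 2 exp( −2 t² / ( n (b−a)² ⌊m²/4⌋² ) ). -/

import Mathlib

/-!
Let `V_n(x) = E[∑_{k=1}^n f(X_k) | X_1 = x]`. Conditioning on the successive states and applying
Hoeffding's lemma to each `V_j(X_k)` shows that `∑ f(X_k)` is sub-Gaussian about its mean with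
variance proxy `n c² / 4`, where `c` bounds the oscillation of every `V_j` (`mgf_path_le`);
Chernoff's argument then gives the tail bound (`chernoff_path`).

The oscillation is controlled by hitting times: on the way from `x` to `y` the walk gains at most
`b - a` per step over the walk already at `y`, so `V_n(x) - V_n(y) ≤ (b - a) E_x[T_y]`
(`accum_cycle_sub_le`). On the `m`-cycle `E_x[T_y] = d (m - d)` with `d = x - y mod m`, which is at
most `⌊m²/4⌋`; only the first-step equation `cycleHit_step` of this function is needed.
-/

open Finset

namespace MC

variable {S : Type*}

/-- `q` is a probability distribution on the finite state space `S`. -/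
def IsProbVec [Fintype S] (q : S → ℝ) : Prop :=
  (∀ x, 0 ≤ q x) ∧ ∑ x, q x = 1

/-- `P` is a transition probability matrix (row-stochastic). -/
def IsStochastic [Fintype S] (P : S → S → ℝ) : Prop :=
  (∀ x y, 0 ≤ P x y) ∧ ∀ x, ∑ y, P x y = 1

/-- `n`-step transition probabilities `Pⁿ(x,y)`. -/
def matPow [Fintype S] [DecidableEq S] (P : S → S → ℝ) : ℕ → S → S → ℝ
  | 0 => fun x y => if x = y then 1 else 0
  | n + 1 => fun x y => ∑ z, matPow P n x z * P z y

/-- `P` is irreducible: any state can reach any state. -/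
def IsIrreducible [Fintype S] [DecidableEq S] (P : S → S → ℝ) : Prop :=
  ∀ x y, ∃ n, 1 ≤ n ∧ 0 < matPow P n x y

/-- `survive P y n x = Pr(T_y > n | X_1 = x)`, where
`T_y = inf {n ≥ 0 : X_{n+1} = y}` is the hitting time of `y`. -/
def survive [Fintype S] [DecidableEq S] (P : S → S → ℝ) (y : S) : ℕ → S → ℝ
  | 0 => fun x => if x = y then 0 else 1
  | n + 1 => fun x => if x = y then 0 else ∑ z, P x z * survive P y n z

/-- The expected hitting time `E[T_y | X_1 = x] = ∑_{n ≥ 0} Pr(T_y > n | X_1 = x)`. -/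
noncomputable def hitExp [Fintype S] [DecidableEq S] (P : S → S → ℝ) (x y : S) : ℝ :=
  (∑' n, ENNReal.ofReal (survive P y n x)).toReal

/-- The maximum expected hitting time `HitT(P) = max_{x,y} E[T_y | X_1 = x]`. -/
noncomputable def HitT [Fintype S] [DecidableEq S] (P : S → S → ℝ) : ℝ :=
  ⨆ x, ⨆ y, hitExp P x y

/-- The probability of the cylinder set given by the path `ω = (X_1, …, X_{n+1})`
for the chain with initial distribution `q` and transition matrix `P`. -/
noncomputable def pathProb [Fintype S] (q : S → ℝ) (P : S → S → ℝ) {n : ℕ}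
    (ω : Fin (n + 1) → S) : ℝ :=
  q (ω 0) * ∏ i : Fin n, P (ω i.castSucc) (ω i.succ)

/-- `Pr_q(A)` for an event `A` determined by the first `n+1` states `(X_1, …, X_{n+1})`. -/
noncomputable def chainProb [Fintype S] (q : S → ℝ) (P : S → S → ℝ) (n : ℕ)
    (A : Set (Fin (n + 1) → S)) : ℝ :=
  ∑ ω : Fin (n + 1) → S, A.indicator (pathProb q P) ω

/-- `stepDist q P k` is the distribution of `X_{k+1}` when `X_1 ∼ q`. -/
def stepDist [Fintype S] (q : S → ℝ) (P : S → S → ℝ) : ℕ → S → ℝ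
  | 0 => q
  | k + 1 => fun y => ∑ x, stepDist q P k x * P x y

end MC

namespace MC

variable {S : Type*}

/-! ### Concentration for finite Markov chains -/

/-- Hoeffding's lemma for a probability vector `q` on a finite set and a function `v` whose
oscillation is at most `c`. -/
lemma hoeffding_finite [Fintype S] (q v : S → ℝ) (hq : IsProbVec q) (c s : ℝ)
    (hv : ∀ x y, v x - v y ≤ c) :
    ∑ x, q x * Real.exp (s * v x) ≤
      Real.exp (s * ∑ x, q x * v x + s ^ 2 * c ^ 2 / 8) := by
  classical
  let _ : MeasurableSpace S := ⊤
  have hne : Nonempty S := by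
    by_contra h
    rw [not_nonempty_iff] at h
    simpa using hq.2
  obtain ⟨x₀, hx₀⟩ := Finite.exists_min v
  have hc : 0 ≤ c := by simpa using hv x₀ x₀
  let μ : MeasureTheory.Measure S :=
    ∑ x, ENNReal.ofReal (q x) • MeasureTheory.Measure.dirac x
  have hμ : MeasureTheory.IsProbabilityMeasure μ := by
    refine ⟨?_⟩
    simp only [μ, MeasureTheory.Measure.finsetSum_apply, MeasureTheory.Measure.smul_apply,
      MeasureTheory.measure_univ, smul_eq_mul, mul_one]
    rw [← ENNReal.ofReal_sum_of_nonneg (fun x _ => hq.1 x), hq.2, ENNReal.ofReal_one]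
  have hint : ∀ g : S → ℝ, ∫ x, g x ∂μ = ∑ x, q x * g x := by
    intro g
    rw [MeasureTheory.integral_finsetSum_measure
      (fun x _ => MeasureTheory.Integrable.smul_measure
        (MeasureTheory.integrable_dirac (by simp)) ENNReal.ofReal_ne_top)]
    refine Finset.sum_congr rfl fun x _ => ?_
    rw [MeasureTheory.integral_smul_measure, MeasureTheory.integral_dirac,
      ENNReal.toReal_ofReal (hq.1 x), smul_eq_mul]
  have key := (ProbabilityTheory.hasSubgaussianMGF_of_mem_Icc (μ := μ) (X := v)
    (a := v x₀) (b := v x₀ + c) (Measurable.of_discrete).aemeasurable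
    (Filter.Eventually.of_forall fun x => ⟨hx₀ x, by linarith [hv x x₀]⟩)).mgf_le s
  rw [ProbabilityTheory.mgf, hint, hint] at key
  have e1 : ∀ x, q x * Real.exp (s * v x) =
      Real.exp (s * ∑ x, q x * v x) * (q x * Real.exp (s * (v x - ∑ x, q x * v x))) := by
    intro x
    rw [mul_left_comm, ← Real.exp_add]
    ring_nf
  rw [Finset.sum_congr rfl fun x _ => e1 x, ← Finset.mul_sum, Real.exp_add]
  refine mul_le_mul_of_nonneg_left (key.trans (Real.exp_le_exp.2 (le_of_eq ?_)))
    (Real.exp_pos _).le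
  simp only [add_sub_cancel_left, NNReal.coe_pow, NNReal.coe_div, coe_nnnorm, Real.norm_eq_abs,
    NNReal.coe_ofNat, abs_of_nonneg hc]
  ring

/-- The expected accumulated value `E[∑_{k=1}^n f(X_k) | X_1 = x]`, by first-step recursion. -/
def accum [Fintype S] (P : S → S → ℝ) (f : S → ℝ) : ℕ → S → ℝ
  | 0 => fun _ => 0
  | n + 1 => fun x => f x + ∑ y, P x y * accum P f n y

lemma stepDist_succ [Fintype S] (q : S → ℝ) (P : S → S → ℝ) (k : ℕ) :
    stepDist q P (k + 1) = stepDist (fun y => ∑ x, q x * P x y) P k := by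
  induction k with
  | zero => rfl
  | succ k ih =>
    rw [stepDist, ih]
    rfl

lemma sum_stepDist [Fintype S] (P : S → S → ℝ) (f : S → ℝ) (n : ℕ) :
    ∀ q : S → ℝ, ∑ k : Fin n, ∑ x, stepDist q P (k : ℕ) x * f x = ∑ x, q x * accum P f n x := by
  induction n with
  | zero => simp [accum]
  | succ n ih =>
    intro q
    simp only [Fin.sum_univ_succ, Fin.val_succ, stepDist_succ, Fin.val_zero, ih, accum, mul_add,
      Finset.sum_add_distrib]
    congr 1
    simp only [Finset.sum_mul, Finset.mul_sum]
    rw [Finset.sum_comm]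
    simp only [mul_assoc]

lemma pathProb_cons [Fintype S] (q : S → ℝ) (P : S → S → ℝ) (n : ℕ) (x : S)
    (ω : Fin (n + 1) → S) :
    pathProb q P (Fin.cons x ω : Fin (n + 2) → S) = q x * pathProb (P x) P ω := by
  simp only [pathProb, Fin.prod_univ_succ, Fin.cons_zero, Fin.castSucc_zero, Fin.cons_succ,
    ← Fin.succ_castSucc]

lemma pathProb_nonneg [Fintype S] {q : S → ℝ} {P : S → S → ℝ} (hq : IsProbVec q)
    (hP : IsStochastic P) {n : ℕ} (ω : Fin (n + 1) → S) : 0 ≤ pathProb q P ω :=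
  mul_nonneg (hq.1 _) (Finset.prod_nonneg fun _ _ => hP.1 _ _)

/-- If the expected accumulated values have oscillation at most `c`, then `∑_{k=1}^n f(X_k)` is
sub-Gaussian about its mean with variance proxy `n c² / 4`. The induction conditions on `X_1`: the
remaining path is a chain started from `P x`, and Hoeffding's lemma handles the first state. -/
lemma mgf_path_le [Fintype S] (P : S → S → ℝ) (hP : IsStochastic P) (f : S → ℝ) (c s : ℝ)
    (hc : ∀ n x y, accum P f n x - accum P f n y ≤ c) (n : ℕ) :
    ∀ q : S → ℝ, IsProbVec q →
      ∑ ω : Fin (n + 1) → S, pathProb q P ω * Real.exp (s * ∑ k : Fin n, f (ω k.castSucc)) ≤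
        Real.exp (s * ∑ x, q x * accum P f n x + n * (s ^ 2 * c ^ 2 / 8)) := by
  induction n with
  | zero =>
    intro q hq
    rw [← (Equiv.funUnique (Fin 1) S).symm.sum_comp]
    simp [accum, pathProb, hq.2]
  | succ n ih =>
    intro q hq
    rw [← (Fin.consEquiv fun _ : Fin (n + 2) => S).sum_comp, Fintype.sum_prod_type]
    have step : ∀ x, ∑ ω : Fin (n + 1) → S,
        pathProb q P (Fin.cons x ω : Fin (n + 2) → S) *
          Real.exp (s * ∑ k : Fin (n + 1), f ((Fin.cons x ω : Fin (n + 2) → S) k.castSucc)) ≤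
        Real.exp (n * (s ^ 2 * c ^ 2 / 8)) * (q x * Real.exp (s * accum P f (n + 1) x)) := by
      intro x
      have h := ih (P x) ⟨hP.1 x, hP.2 x⟩
      have h2 := mul_le_mul_of_nonneg_left h
        (mul_nonneg (hq.1 x) (Real.exp_pos (s * f x)).le)
      refine le_of_eq_of_le ?_ (h2.trans_eq ?_)
      · rw [Finset.mul_sum]
        refine Finset.sum_congr rfl fun ω _ => ?_
        rw [pathProb_cons]
        simp only [Fin.sum_univ_succ, Fin.castSucc_zero, Fin.cons_zero, ← Fin.succ_castSucc,
          Fin.cons_succ, mul_add, Real.exp_add]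
        ring
      · simp only [accum, mul_add, Real.exp_add]
        ring
    refine (Finset.sum_le_sum fun x _ => step x).trans ?_
    rw [← Finset.mul_sum]
    refine (mul_le_mul_of_nonneg_left (hoeffding_finite q (accum P f (n + 1)) hq c s
      (hc (n + 1))) (Real.exp_pos _).le).trans_eq ?_
    rw [← Real.exp_add]
    push_cast
    ring_nf

/-- Chernoff's argument, applied to both tails. When `n c² = 0` the exponent is the junk value
`0`, and the bound reads `2`. -/
lemma chernoff_path [Fintype S] (P : S → S → ℝ) (hP : IsStochastic P) (f : S → ℝ) (c : ℝ)
    (hc : ∀ n x y, accum P f n x - accum P f n y ≤ c) (n : ℕ)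
    (q : S → ℝ) (hq : IsProbVec q) (t : ℝ) (ht : 0 < t) :
    chainProb q P n {ω | t ≤ |∑ k : Fin n, (f (ω k.castSucc) -
        ∑ x, stepDist q P (k : ℕ) x * f x)|} ≤
      2 * Real.exp (-(2 * t ^ 2) / (n * c ^ 2)) := by
  set μ := ∑ x, q x * accum P f n x with hμ
  -- `s` minimises the exponent `-s t + n c² s² / 8`.
  set s := 4 * t / (n * c ^ 2) with hs
  have hs0 : 0 ≤ s := by positivity
  let Z : (Fin (n + 1) → S) → ℝ := fun ω => ∑ k : Fin n, f (ω k.castSucc)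
  have tail : ∀ r : ℝ, r ^ 2 = s ^ 2 →
      ∑ ω, pathProb q P ω * Real.exp (r * (Z ω - μ) - s * t) ≤
        Real.exp (-(2 * t ^ 2) / (n * c ^ 2)) := by
    intro r hr
    have h := mul_le_mul_of_nonneg_left (mgf_path_le P hP f c r hc n q hq)
      (Real.exp_pos (-(r * μ) - s * t)).le
    refine le_of_eq_of_le ?_ (h.trans_eq ?_)
    · rw [Finset.mul_sum]
      refine Finset.sum_congr rfl fun ω _ => ?_
      rw [mul_left_comm, ← Real.exp_add]
      simp only [Z]
      ring_nf
    · rw [← Real.exp_add, hr, ← hμ]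
      congr 1
      by_cases hD : (n : ℝ) * c ^ 2 = 0
      · have h0 : s = 0 := by rw [hs, hD, div_zero]
        rw [h0, hD]
        simp
      · have e : s * (n * c ^ 2) = 4 * t := by rw [hs, div_mul_cancel₀ _ hD]
        rw [eq_div_iff hD]
        linear_combination (s * (n * c ^ 2) / 8 - t / 2) * e
  rw [chainProb, two_mul]
  refine le_trans ?_ (add_le_add (tail s rfl) (tail (-s) (by ring)))
  rw [← Finset.sum_add_distrib]
  refine Finset.sum_le_sum fun ω _ => ?_
  have hp := pathProb_nonneg hq hP ω
  rw [← mul_add]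
  by_cases hω : ω ∈ {ω : Fin (n + 1) → S | t ≤ |∑ k : Fin n, (f (ω k.castSucc) -
      ∑ x, stepDist q P (k : ℕ) x * f x)|}
  · rw [Set.indicator_of_mem hω]
    rw [Set.mem_ofPred_eq, Finset.sum_sub_distrib, sum_stepDist] at hω
    change t ≤ |Z ω - μ| at hω
    refine le_mul_of_one_le_right hp ?_
    rcases le_abs.1 hω with h | h
    · have := Real.one_le_exp (x := s * (Z ω - μ) - s * t) (by nlinarith)
      linarith [Real.exp_pos (-s * (Z ω - μ) - s * t)]
    · have := Real.one_le_exp (x := -s * (Z ω - μ) - s * t) (by nlinarith)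
      linarith [Real.exp_pos (s * (Z ω - μ) - s * t)]
  · rw [Set.indicator_of_notMem hω]
    positivity

/-! ### The random walk on the cycle -/

/-- The expected hitting time of `0` from `z` for the simple random walk on the `m`-cycle. -/
def cycleHit {m : ℕ} (z : ZMod m) : ℝ := z.val * (m - z.val)

lemma cycleHit_nonneg {m : ℕ} [NeZero m] (z : ZMod m) : 0 ≤ cycleHit z := by
  have h : (z.val : ℝ) ≤ m := by exact_mod_cast (ZMod.val_lt z).le
  exact mul_nonneg (Nat.cast_nonneg _) (by linarith)

lemma cycleHit_le {m : ℕ} [NeZero m] (z : ZMod m) :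
    cycleHit z ≤ ((m ^ 2 / 4 : ℕ) : ℝ) := by
  have h := (ZMod.val_lt z).le
  rw [cycleHit, ← Nat.cast_sub h, ← Nat.cast_mul, Nat.cast_le, Nat.le_div_iff_mul_le (by norm_num)]
  zify [h]
  nlinarith [sq_nonneg (2 * (z.val : ℤ) - m)]

/-- First-step analysis of the hitting time away from the target. -/
lemma cycleHit_step {m : ℕ} [NeZero m] (z : ZMod m) (hz : z ≠ 0) :
    (cycleHit (z + 1) + cycleHit (z - 1)) / 2 = cycleHit z - 1 := by
  have hm : z.val < m := ZMod.val_lt z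
  have hpos : 0 < z.val := Nat.pos_of_ne_zero fun h => hz ((ZMod.val_eq_zero z).1 h)
  have hsub : ((z - 1).val : ℝ) = z.val - 1 := by
    have : z - 1 = ((z.val - 1 : ℕ) : ZMod m) := by
      rw [Nat.cast_sub hpos, ZMod.natCast_zmod_val, Nat.cast_one]
    rw [this, ZMod.val_natCast_of_lt (by omega), Nat.cast_sub hpos, Nat.cast_one]
  have hadd : cycleHit (z + 1) = (z.val + 1) * (m - (z.val + 1)) := by
    have e : z + 1 = ((z.val + 1 : ℕ) : ZMod m) := by
      rw [Nat.cast_add, ZMod.natCast_zmod_val, Nat.cast_one]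
    rcases Nat.lt_or_ge (z.val + 1) m with h | h
    · rw [cycleHit, e, ZMod.val_natCast_of_lt h]
      push_cast
      ring
    -- In the other case the walk wraps around: `z + 1 = 0` and both sides vanish.
    · have h' : z.val + 1 = m := by omega
      have h'' : (m : ℝ) = z.val + 1 := by exact_mod_cast h'.symm
      have e0 : z + 1 = 0 := by rw [e, h', ZMod.natCast_self]
      rw [e0, h'', cycleHit, ZMod.val_zero]
      simp
  rw [hadd, cycleHit, cycleHit, hsub]
  ring

/-- The transition matrix of the simple random walk on the `m`-cycle. -/
noncomputable abbrev cycleP (m : ℕ) : ZMod m → ZMod m → ℝ := fun x y =>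
  ((if y = x + 1 then (1 : ℝ) else 0) + (if y = x - 1 then 1 else 0)) / 2

lemma sum_cycleP {m : ℕ} [NeZero m] (x : ZMod m) (g : ZMod m → ℝ) :
    ∑ y, cycleP m x y * g y = (g (x + 1) + g (x - 1)) / 2 := by
  simp [cycleP, div_mul_eq_mul_div, ← Finset.sum_div, add_mul, Finset.sum_add_distrib]

lemma cycleP_stochastic (m : ℕ) [NeZero m] : IsStochastic (cycleP m) := by
  refine ⟨fun x y => ?_, fun x => ?_⟩
  · unfold cycleP
    positivity
  · simpa using sum_cycleP x fun _ => 1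

lemma accum_cycle_succ {m : ℕ} [NeZero m] (f : ZMod m → ℝ) (n : ℕ) (x : ZMod m) :
    accum (cycleP m) f (n + 1) x =
      f x + (accum (cycleP m) f n (x + 1) + accum (cycleP m) f n (x - 1)) / 2 := by
  simp only [accum, sum_cycleP]

lemma accum_cycle_mono {m : ℕ} [NeZero m] (f : ZMod m → ℝ) (a : ℝ) (ha : ∀ x, a ≤ f x) (n : ℕ) :
    ∀ x, accum (cycleP m) f n x + a ≤ accum (cycleP m) f (n + 1) x := by
  induction n with
  | zero => intro x; simpa [accum] using ha x
  | succ n ih =>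
    intro x
    rw [accum_cycle_succ, accum_cycle_succ f (n + 1)]
    linarith [ih (x + 1), ih (x - 1)]

/-- Starting from `x` instead of `y` changes the expected accumulated value by at most `b - a`
per step needed to reach `y` from `x`. -/
lemma accum_cycle_sub_le {m : ℕ} [NeZero m] (f : ZMod m → ℝ) (a b : ℝ)
    (hf : ∀ x, f x ∈ Set.Icc a b) (n : ℕ) :
    ∀ x y, accum (cycleP m) f n x - accum (cycleP m) f n y ≤ (b - a) * cycleHit (x - y) := by
  have hab : 0 ≤ b - a := by linarith [(hf 0).1, (hf 0).2]
  induction n with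
  | zero =>
    intro x y
    simpa [accum] using mul_nonneg hab (cycleHit_nonneg (x - y))
  | succ n ih =>
    intro x y
    rcases eq_or_ne x y with rfl | hxy
    · simpa using mul_nonneg hab (cycleHit_nonneg (x - x))
    · have h1 := ih (x + 1) y
      have h2 := ih (x - 1) y
      have h3 := accum_cycle_mono f a (fun x => (hf x).1) n y
      have h4 := cycleHit_step (x - y) (sub_ne_zero.2 hxy)
      rw [add_sub_right_comm] at h1
      rw [sub_right_comm] at h2
      rw [accum_cycle_succ f n x]
      have h5 : (b - a) * ((cycleHit (x - y + 1) + cycleHit (x - y - 1)) / 2) =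
        (b - a) * (cycleHit (x - y) - 1) := by rw [h4]
      linarith [(hf x).2]

end MC

open MC in
/-- **Hoeffding inequality for the random walk on the `m`-cycle** (Example 2).
For the simple random walk on `S = ℤ/mℤ` with `P(x,y) = (1{y = x+1} + 1{y = x−1})/2`,
initial distribution `q`, and `f : S → [a,b]`, for every `t > 0`,
`Pr_q(|∑_{k=1}^n (f(X_k) − E_q[f(X_k)])| ≥ t) ≤ 2 exp(−2t²/(n(b−a)²⌊m²/4⌋²))`. -/
theorem markov_hoeffding_cycle (m : ℕ) [NeZero m] (hm : 2 ≤ m)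
    (q : ZMod m → ℝ) (hq : IsProbVec q)
    (f : ZMod m → ℝ) (a b : ℝ) (hf : ∀ x, f x ∈ Set.Icc a b)
    (n : ℕ) (t : ℝ) (ht : 0 < t) :
    chainProb q
      (fun x y : ZMod m =>
        ((if y = x + 1 then (1 : ℝ) else 0) + (if y = x - 1 then 1 else 0)) / 2) n
      {ω | t ≤ |∑ k : Fin n, (f (ω k.castSucc) -
        ∑ x, stepDist q (fun x y : ZMod m =>
          ((if y = x + 1 then (1 : ℝ) else 0) + (if y = x - 1 then 1 else 0)) / 2)
          (k : ℕ) x * f x)|} ≤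
      2 * Real.exp (-(2 * t ^ 2) / (n * (b - a) ^ 2 * ((m ^ 2 / 4 : ℕ) : ℝ) ^ 2)) := by
  have hab : 0 ≤ b - a := by linarith [(hf 0).1, (hf 0).2]
  have h := chernoff_path (cycleP m) (cycleP_stochastic m) f ((b - a) * ((m ^ 2 / 4 : ℕ) : ℝ))
    (fun n x y => (accum_cycle_sub_le f a b hf n x y).trans
      (mul_le_mul_of_nonneg_left (cycleHit_le _) hab)) n q hq t ht
  rwa [mul_pow, ← mul_assoc] at h
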